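/- Let E₁ and E₂ be metrizable topological spaces with their Borel σ-algebras, let Ψ : E₁ × E₂ → ℝ be bounded and jointly Borel measurable, and let Φ₁, Φ₂ : E₁ × E₂ → ℝ be jointly Borel measurable. Let X¹ and X² be independent càdlàg processes with values in E₁ and E₂ such that for each x₂ ∈ E₂ the process t ↦ Ψ(X¹_t, x₂) − ∫₀ᵗ Φ₁(X¹_s, x₂) ds is a martingale with respect to the filtration generated by X¹ (with the integrability conditions E[|Ψ(X¹_t,x₂)|] < ∞ and ∫₀ᵗ E[|Φ₁(X¹_s,x₂)|] ds < ∞ for all t), and symmetrically for X² and Φ₂. Assume ∫₀ᵀ∫₀ᵀ E[|Φᵢ(X¹_s, X²_t)|] ds dt < ∞ for all T ≥ 0, i = 1,2. If Φ₁(x₁, x₂) ≥ Φ₂(x₁, x₂) for all x₁ ∈ E₁ and x₂ ∈ E₂, then E[Ψ(X¹_T, X²_0)] ≥ E[Ψ(X¹_0, X²_T)] for every T ∈ [0,∞). -/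

import Mathlib

open MeasureTheory ProbabilityTheory Filter Set
open scoped NNReal ENNReal

lemma aux_joint {Ω E : Type*} [MeasurableSpace Ω] [TopologicalSpace E]
    [TopologicalSpace.MetrizableSpace E] [MeasurableSpace E] [BorelSpace E]
    (Y : ℝ → Ω → E) (hm : ∀ t, Measurable (Y t))
    (hrc : ∀ ω t, ContinuousWithinAt (fun s => Y s ω) (Ici t) t) :
    Measurable (fun p : ℝ × Ω => Y p.1 p.2) := by
  let τ : ℕ → ℝ → ℝ := fun n t => ((⌊((n:ℝ)+1) * t⌋ : ℝ) + 1) / ((n:ℝ)+1)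
  refine measurable_of_tendsto_metrizable (f := fun n (p : ℝ × Ω) => Y (τ n p.1) p.2) ?_ ?_
  · intro n
    have h1 : Measurable (fun q : ℤ × Ω => Y (((q.1:ℝ)+1)/((n:ℝ)+1)) q.2) :=
      measurable_from_prod_countable_right (fun k => hm (((k:ℝ)+1)/((n:ℝ)+1)))
    have h2 : Measurable (fun p : ℝ × Ω => ((⌊((n:ℝ)+1) * p.1⌋ : ℤ), p.2)) :=
      (Int.measurable_floor.comp (measurable_fst.const_mul _)).prodMk measurable_snd
    exact h1.comp h2
  · rw [tendsto_pi_nhds]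
    rintro ⟨t, ω⟩
    have hge : ∀ n, t ≤ τ n t := by
      intro n
      have hn : (0:ℝ) < (n:ℝ)+1 := by positivity
      rw [le_div_iff₀ hn]
      nlinarith [Int.lt_floor_add_one (((n:ℝ)+1) * t)]
    have hle : ∀ n, τ n t ≤ t + 1 / ((n:ℝ)+1) := by
      intro n
      have hn : (0:ℝ) < (n:ℝ)+1 := by positivity
      have h1 : (t + 1 / ((n:ℝ)+1)) * ((n:ℝ)+1) = ((n:ℝ)+1) * t + 1 := by field_simp
      rw [div_le_iff₀ hn, h1]
      nlinarith [Int.floor_le (((n:ℝ)+1) * t)]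
    have ht : Tendsto (fun n => τ n t) atTop (nhds t) := by
      refine tendsto_of_tendsto_of_tendsto_of_le_of_le tendsto_const_nhds ?_ hge hle
      simpa using (tendsto_const_nhds (x := t)).add
        (tendsto_one_div_add_atTop_nhds_zero_nat (𝕜 := ℝ))
    exact (hrc ω t).tendsto.comp
      (tendsto_nhdsWithin_iff.2 ⟨ht, Eventually.of_forall hge⟩)

/-- triangle identity -/
lemma aux_tri (F f : ℝ → ℝ → ℝ) (T : ℝ) (hT : 0 ≤ T)
    (hf : IntegrableOn (fun p : ℝ × ℝ => f p.1 p.2) (Icc 0 T ×ˢ Icc 0 T))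
    (hF : ∀ᵐ t, t ∈ Icc 0 T → ∀ s ∈ Icc 0 T, F s t - F 0 t = ∫ r in (0:ℝ)..s, f r t) :
    ∫ t in (0:ℝ)..T, (F (T - t) t - F 0 t) =
      ∫ p in {p : ℝ × ℝ | 0 ≤ p.1 ∧ 0 ≤ p.2 ∧ p.1 + p.2 ≤ T}, f p.1 p.2 := by
  set D : Set (ℝ × ℝ) := {p : ℝ × ℝ | 0 ≤ p.1 ∧ 0 ≤ p.2 ∧ p.1 + p.2 ≤ T} with hD
  have hDm : MeasurableSet D := by
    refine (measurableSet_le measurable_const measurable_fst).inter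
      ((measurableSet_le measurable_const measurable_snd).inter
        (measurableSet_le (measurable_fst.add measurable_snd) measurable_const))
  have hDs : D ⊆ Icc 0 T ×ˢ Icc 0 T := by
    rintro ⟨a, b⟩ ⟨h1, h2, h3⟩
    simp only at h1 h2 h3
    exact ⟨⟨h1, by simp only; linarith⟩, ⟨h2, by simp only; linarith⟩⟩
  have hi : Integrable (D.indicator (fun p : ℝ × ℝ => f p.1 p.2)) (volume.prod volume) :=
    (integrable_indicator_iff hDm).2 (hf.mono_set hDs)
  rw [← integral_indicator hDm]
  change _ = ∫ p, _ ∂(volume.prod volume)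
  rw [integral_prod_symm _ hi, intervalIntegral.integral_of_le hT, ← integral_Icc_eq_integral_Ioc,
    ← integral_indicator measurableSet_Icc]
  refine integral_congr_ae ?_
  filter_upwards [hF] with t ht
  by_cases h : t ∈ Icc 0 T
  · rw [indicator_of_mem h, ht h (T - t) ⟨by linarith [h.2], by linarith [h.1]⟩,
      intervalIntegral.integral_of_le (by linarith [h.2]), ← integral_Icc_eq_integral_Ioc,
      ← integral_indicator measurableSet_Icc]
    congr 1 with r
    simp only [indicator, hD, mem_Icc, mem_ofPred_eq]
    congr 1
    apply propext
    constructor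
    · rintro ⟨a, b⟩; exact ⟨a, h.1, by linarith⟩
    · rintro ⟨a, _, b⟩; exact ⟨a, by linarith⟩
  · rw [indicator_of_notMem h]
    symm
    refine integral_eq_zero_of_ae (Eventually.of_forall fun r => ?_)
    refine indicator_of_notMem ?_ _
    intro hh
    exact h (hDs hh).2

lemma aux_core (F f₁ f₂ : ℝ → ℝ → ℝ)
    (hFm : Measurable (fun p : ℝ × ℝ => F p.1 p.2)) (C : ℝ) (hFb : ∀ s t, |F s t| ≤ C)
    (hc₁ : ∀ T, 0 ≤ T → ContinuousWithinAt (fun s => F s 0) (Ici T) T)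
    (hc₂ : ∀ T, 0 ≤ T → ContinuousWithinAt (fun s => F 0 s) (Ici T) T)
    (hf₁ : ∀ T, 0 ≤ T → IntegrableOn (fun p : ℝ × ℝ => f₁ p.1 p.2) (Icc 0 T ×ˢ Icc 0 T))
    (hf₂ : ∀ T, 0 ≤ T → IntegrableOn (fun p : ℝ × ℝ => f₂ p.1 p.2) (Icc 0 T ×ˢ Icc 0 T))
    (hF₁ : ∀ T, 0 ≤ T → ∀ᵐ t, t ∈ Icc 0 T → ∀ s ∈ Icc 0 T,
      F s t - F 0 t = ∫ r in (0:ℝ)..s, f₁ r t)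
    (hF₂ : ∀ T, 0 ≤ T → ∀ᵐ s, s ∈ Icc 0 T → ∀ t ∈ Icc 0 T,
      F s t - F s 0 = ∫ r in (0:ℝ)..t, f₂ s r)
    (hle : ∀ T, 0 ≤ T → ∀ᵐ p ∂(volume.restrict ((Icc (0:ℝ) T) ×ˢ (Icc (0:ℝ) T))),
      f₂ p.1 p.2 ≤ f₁ p.1 p.2) (T : ℝ) (hT : 0 ≤ T) : F 0 T ≤ F T 0 := by
  let D : ℝ → Set (ℝ × ℝ) := fun T => {p : ℝ × ℝ | 0 ≤ p.1 ∧ 0 ≤ p.2 ∧ p.1 + p.2 ≤ T}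
  have hDm : ∀ T, MeasurableSet (D T) := fun T =>
    (measurableSet_le measurable_const measurable_fst).inter
      ((measurableSet_le measurable_const measurable_snd).inter
        (measurableSet_le (measurable_fst.add measurable_snd) measurable_const))
  have hDs : ∀ T, D T ⊆ Icc 0 T ×ˢ Icc 0 T := by
    rintro T ⟨a, b⟩ ⟨h1, h2, h3⟩
    simp only at h1 h2 h3
    exact ⟨⟨h1, by simp only; linarith⟩, ⟨h2, by simp only; linarith⟩⟩
  have hint : ∀ (g : ℝ → ℝ × ℝ), Measurable g → ∀ a b,
      IntervalIntegrable (fun x => F (g x).1 (g x).2) volume a b := by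
    intro g hg a b
    refine (intervalIntegrable_const (c := C)).mono_fun
      (hFm.comp hg).aestronglyMeasurable (Eventually.of_forall fun x => ?_)
    exact (hFb _ _).trans (le_abs_self C)
  have hi0 := hint (fun x => (x, 0)) (by fun_prop)
  have hi1 := hint (fun x => (0, x)) (by fun_prop)
  have key : ∀ T, 0 ≤ T → ∫ s in (0:ℝ)..T, (F s 0 - F 0 s) =
      ∫ p in D T, (f₁ p.1 p.2 - f₂ p.1 p.2) := by
    intro T hT
    have e1 := aux_tri F f₁ T hT (hf₁ T hT) (hF₁ T hT)
    have hsw : IntegrableOn (fun p : ℝ × ℝ => f₂ p.2 p.1) (Icc 0 T ×ˢ Icc 0 T) := by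
      have := hf₂ T hT
      rw [IntegrableOn, Measure.volume_eq_prod, ← Measure.prod_restrict] at this ⊢
      exact this.swap
    have e2 := aux_tri (fun s t => F t s) (fun s t => f₂ t s) T hT hsw (hF₂ T hT)
    have e3 : ∫ p in D T, f₂ p.2 p.1 = ∫ p in D T, f₂ p.1 p.2 := by
      rw [← integral_indicator (hDm T), ← integral_indicator (hDm T)]
      rw [Measure.volume_eq_prod, ← integral_prod_swap]
      congr 1 with p
      simp only [indicator, D, mem_ofPred_eq, Prod.fst_swap, Prod.snd_swap]
      congr 1
      apply propext
      constructor
      · rintro ⟨a, b, c⟩; exact ⟨b, a, by linarith⟩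
      · rintro ⟨a, b, c⟩; exact ⟨b, a, by linarith⟩
    rw [integral_sub ((hf₁ T hT).mono_set (hDs T)) ((hf₂ T hT).mono_set (hDs T)), ← e3]
    change _ = (∫ p in {p : ℝ × ℝ | 0 ≤ p.1 ∧ 0 ≤ p.2 ∧ p.1 + p.2 ≤ T}, f₁ p.1 p.2)
      - (∫ p in {p : ℝ × ℝ | 0 ≤ p.1 ∧ 0 ≤ p.2 ∧ p.1 + p.2 ≤ T}, f₂ p.2 p.1)
    rw [← e1, ← e2, intervalIntegral.integral_sub
        (hint (fun x => (T - x, x)) (by fun_prop) _ _) (hi1 _ _),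
      intervalIntegral.integral_sub
        (hint (fun x => (x, T - x)) (by fun_prop) _ _) (hi0 _ _),
      intervalIntegral.integral_sub (hi0 _ _) (hi1 _ _)]
    have := intervalIntegral.integral_comp_sub_left (a := 0) (b := T)
      (fun x => F x (T - x)) T
    simp only [sub_sub_cancel, sub_self, sub_zero] at this
    rw [this]; ring
  have mono : ∀ T', T ≤ T' → 0 ≤ ∫ s in T..T', (F s 0 - F 0 s) := by
    intro T' hTT
    have hT' := hT.trans hTT
    rw [← intervalIntegral.integral_interval_sub_left (a := 0)
      ((hi0 _ _).sub (hi1 _ _)) ((hi0 _ _).sub (hi1 _ _)), key T hT, key T' hT', sub_nonneg]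
    refine setIntegral_mono_set ?_ ?_ (LE.le.eventuallyLE ?_)
    · exact ((hf₁ T' hT').mono_set (hDs T')).sub ((hf₂ T' hT').mono_set (hDs T'))
    · filter_upwards [ae_restrict_of_ae_restrict_of_subset (hDs T') (hle T' hT')] with p hp
      exact sub_nonneg.2 hp
    · rintro p ⟨a, b, c⟩; exact ⟨a, b, c.trans hTT⟩
  by_contra hcon
  push Not at hcon
  have hcw : ContinuousWithinAt (fun s => F 0 s - F s 0) (Ici T) T := (hc₂ T hT).sub (hc₁ T hT)
  have hev : ∀ᶠ s in nhdsWithin T (Ici T), 0 < F 0 s - F s 0 :=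
    hcw.tendsto.eventually (lt_mem_nhds (sub_pos.2 hcon))
  obtain ⟨u, hu, hsub⟩ := (mem_nhdsGE_iff_exists_Icc_subset).1 hev
  have hpos := intervalIntegral.intervalIntegral_pos_of_pos_on
    (f := fun s => F 0 s - F s 0) (a := T) (b := u) ((hi1 _ _).sub (hi0 _ _))
    (fun x hx => hsub ⟨hx.1.le, hx.2.le⟩) hu
  have h0 := mono u (le_of_lt hu)
  have : ∫ s in T..u, (F 0 s - F s 0) = - ∫ s in T..u, (F s 0 - F 0 s) := by
    rw [← intervalIntegral.integral_neg]; simp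
  linarith

lemma aux_int {α β : Type*} [MeasurableSpace α] [MeasurableSpace β] (μ : Measure α)
    (ν : Measure β) [SFinite μ] [SFinite ν] (f : α × β → ℝ) (hf : Measurable f)
    (h : ∫⁻ x, ∫⁻ y, ENNReal.ofReal |f (x, y)| ∂ν ∂μ < ⊤) : Integrable f (μ.prod ν) := by
  refine ⟨hf.aestronglyMeasurable, ?_⟩
  rw [hasFiniteIntegral_iff_norm, lintegral_prod _ (by fun_prop)]
  exact h

section side
variable {Ω Ω' E E' : Type*} [MeasurableSpace Ω] [MeasurableSpace Ω'] [MeasurableSpace E]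
  [MeasurableSpace E']

lemma aux_A (P : Measure Ω) [IsProbabilityMeasure P]
    (Ψ Φ : E × E' → ℝ) (hΨm : Measurable Ψ) (C : ℝ) (hΨb : ∀ x, |Ψ x| ≤ C) (hΦm : Measurable Φ)
    (X : ℝ → Ω → E) (hX : Measurable (fun p : ℝ × Ω => X p.1 p.2))
    (hint : ∀ x, ∀ t : ℝ, 0 ≤ t →
      (∫⁻ s in Icc (0 : ℝ) t, ∫⁻ ω, ENNReal.ofReal |Φ (X s ω, x)| ∂P) < ⊤)
    (hM : ∀ x, ∀ t : ℝ, 0 ≤ t →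
      ∫ ω, (Ψ (X t ω, x) - ∫ s in (0:ℝ)..t, Φ (X s ω, x)) ∂P = ∫ ω, Ψ (X 0 ω, x) ∂P)
    (x : E') (t : ℝ) (ht : 0 ≤ t) :
    (∫ ω, (∫ s in (0:ℝ)..t, Φ (X s ω, x)) ∂P =
      (∫ ω, Ψ (X t ω, x) ∂P) - ∫ ω, Ψ (X 0 ω, x) ∂P) ∧
    (∫ ω, (∫ s in (0:ℝ)..t, Φ (X s ω, x)) ∂P = ∫ s in (0:ℝ)..t, ∫ ω, Φ (X s ω, x) ∂P) ∧
    IntegrableOn (fun s => ∫ ω, Φ (X s ω, x) ∂P) (Icc 0 t) := by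
  have hI : Integrable (fun q : ℝ × Ω => Φ (X q.1 q.2, x))
      ((volume.restrict (Icc 0 t)).prod P) :=
    aux_int _ _ _ (hΦm.comp (hX.prodMk measurable_const)) (hint x t ht)
  have hI' : Integrable (fun q : ℝ × Ω => Φ (X q.1 q.2, x))
      ((volume.restrict (Ioc 0 t)).prod P) := by
    exact hI.mono_measure (Measure.prod_mono
      (Measure.restrict_mono Ioc_subset_Icc_self le_rfl) le_rfl)
  have hXt : Measurable (X t) := hX.comp measurable_prodMk_left
  have hΨi : Integrable (fun ω => Ψ (X t ω, x)) P :=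
    Integrable.of_bound (hΨm.comp (hXt.prodMk measurable_const)).aestronglyMeasurable C
      (Eventually.of_forall fun ω => hΨb _)
  have hΦi : Integrable (fun ω => ∫ s in (0:ℝ)..t, Φ (X s ω, x)) P := by
    simp_rw [intervalIntegral.integral_of_le ht]
    exact hI'.integral_prod_right
  refine ⟨?_, ?_, hI.integral_prod_left⟩
  · have := hM x t ht
    rw [integral_sub hΨi hΦi] at this
    linarith
  · symm
    refine intervalIntegral_integral_swap (f := fun s ω => Φ (X s ω, x)) ?_
    rw [uIoc_of_le ht]
    exact hI'

lemma aux_side (P : Measure Ω) [IsProbabilityMeasure P] (P' : Measure Ω') [IsProbabilityMeasure P']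
    (Ψ Φ : E × E' → ℝ) (hΨm : Measurable Ψ) (C : ℝ) (hΨb : ∀ x, |Ψ x| ≤ C) (hΦm : Measurable Φ)
    (X : ℝ → Ω → E) (hX : Measurable (fun p : ℝ × Ω => X p.1 p.2))
    (hint : ∀ x, ∀ t : ℝ, 0 ≤ t →
      (∫⁻ s in Icc (0 : ℝ) t, ∫⁻ ω, ENNReal.ofReal |Φ (X s ω, x)| ∂P) < ⊤)
    (hM : ∀ x, ∀ t : ℝ, 0 ≤ t →
      ∫ ω, (Ψ (X t ω, x) - ∫ s in (0:ℝ)..t, Φ (X s ω, x)) ∂P = ∫ ω, Ψ (X 0 ω, x) ∂P)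
    (Z : Ω' → E') (hZ : Measurable Z) :
    (∀ T, 0 ≤ T →
      ContinuousWithinAt (fun s => ∫ p, Ψ (X s p.1, Z p.2) ∂(P.prod P')) (Ici T) T) ∧
    (∀ T, (∫⁻ r in Icc (0:ℝ) T, ∫⁻ p, ENNReal.ofReal |Φ (X r p.1, Z p.2)| ∂(P.prod P')) < ⊤ →
      ∀ s ∈ Icc 0 T, (∫ p, Ψ (X s p.1, Z p.2) ∂(P.prod P'))
        - (∫ p, Ψ (X 0 p.1, Z p.2) ∂(P.prod P'))
        = ∫ r in (0:ℝ)..s, ∫ p, Φ (X r p.1, Z p.2) ∂(P.prod P')) := by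
  have hA := aux_A P Ψ Φ hΨm C hΨb hΦm X hX hint hM
  have hXt : ∀ t, Measurable (X t) := fun t => hX.comp measurable_prodMk_left
  have hΨi : ∀ s, Integrable (fun p : Ω × Ω' => Ψ (X s p.1, Z p.2)) (P.prod P') := fun s =>
    Integrable.of_bound (hΨm.comp (((hXt s).comp measurable_fst).prodMk
      (hZ.comp measurable_snd))).aestronglyMeasurable C (Eventually.of_forall fun ω => hΨb _)
  have hG : ∀ s, ∫ p, Ψ (X s p.1, Z p.2) ∂(P.prod P') = ∫ ω', ∫ ω, Ψ (X s ω, Z ω') ∂P ∂P' :=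
    fun s => integral_prod_symm _ (hΨi s)
  constructor
  · intro T hT
    simp_rw [hG]
    refine tendsto_integral_filter_of_dominated_convergence (fun _ => C) ?_ ?_
      (integrable_const C) ?_
    · exact Eventually.of_forall fun s => ((hΨi s).integral_prod_right).aestronglyMeasurable
    · refine Eventually.of_forall fun s => Eventually.of_forall fun ω' => ?_
      have := norm_integral_le_of_norm_le_const (μ := P) (f := fun ω => Ψ (X s ω, Z ω')) (C := C)
        (Eventually.of_forall fun ω => hΨb _)
      simpa using this
    · refine Eventually.of_forall fun ω' => ?_
      have h1 : ContinuousWithinAt (fun s => (∫ ω, Ψ (X 0 ω, Z ω') ∂P) +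
          ∫ r in (0:ℝ)..s, ∫ ω, Φ (X r ω, Z ω') ∂P) (Ici T) T := by
        refine continuousWithinAt_const.add ?_
        have h2 := intervalIntegral.continuousOn_primitive_interval (μ := volume) (a := 0)
          (b := T + 1) (f := fun r => ∫ ω, Φ (X r ω, Z ω') ∂P)
          (by rw [uIcc_of_le (by linarith)]; exact (hA (Z ω') (T+1) (by linarith)).2.2)
        rw [uIcc_of_le (by linarith)] at h2
        have h3 := (h2 T ⟨hT, by linarith⟩).mono
          (Icc_subset_Icc_left hT : Icc T (T+1) ⊆ Icc 0 (T+1))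
        exact h3.mono_of_mem_nhdsWithin (Icc_mem_nhdsGE (by linarith))
      refine Tendsto.congr' ?_ ?_ (f₁ := fun s => (∫ ω, Ψ (X 0 ω, Z ω') ∂P) +
          ∫ r in (0:ℝ)..s, ∫ ω, Φ (X r ω, Z ω') ∂P)
      · filter_upwards [self_mem_nhdsWithin] with s hs
        have := hA (Z ω') s (hT.trans hs)
        rw [← this.2.1, this.1]; ring
      · have := hA (Z ω') T hT
        have h4 : ∫ ω, Ψ (X T ω, Z ω') ∂P = (∫ ω, Ψ (X 0 ω, Z ω') ∂P) +
          ∫ r in (0:ℝ)..T, ∫ ω, Φ (X r ω, Z ω') ∂P := by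
          rw [← this.2.1, this.1]; ring
        rw [h4]
        exact h1
  · intro T hfin s hs
    have hI : Integrable (fun q : ℝ × (Ω × Ω') => Φ (X q.1 q.2.1, Z q.2.2))
        ((volume.restrict (Icc 0 T)).prod (P.prod P')) :=
      aux_int _ _ _ (hΦm.comp ((hX.comp (measurable_fst.prodMk (measurable_fst.comp
        measurable_snd))).prodMk (hZ.comp (measurable_snd.comp measurable_snd)))) hfin
    have hI' : Integrable (fun q : ℝ × (Ω × Ω') => Φ (X q.1 q.2.1, Z q.2.2))
        ((volume.restrict (Ioc 0 s)).prod (P.prod P')) := by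
      refine hI.mono_measure ?_
      refine Measure.prod_mono ?_ le_rfl
      have hss : Ioc 0 s ⊆ Icc 0 T := fun y hy => ⟨hy.1.le, hy.2.trans hs.2⟩
      exact Measure.restrict_mono hss le_rfl
    rw [intervalIntegral_integral_swap (f := fun r (p : Ω × Ω') => Φ (X r p.1, Z p.2))
      (by rw [uIoc_of_le hs.1]; exact hI')]
    have hi : Integrable (fun p : Ω × Ω' => ∫ r in (0:ℝ)..s, Φ (X r p.1, Z p.2)) (P.prod P') := by
      simp_rw [intervalIntegral.integral_of_le hs.1]
      exact hI'.integral_prod_right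
    rw [integral_prod_symm _ hi, hG, hG, ← integral_sub (hΨi s).integral_prod_right
      (hΨi 0).integral_prod_right]
    congr 1 with ω'
    exact (hA (Z ω') s hs.1).1.symm
end side

lemma aux_main
    {Ω : Type*} [MeasurableSpace Ω] (P : Measure Ω) [IsProbabilityMeasure P]
    {E₁ E₂ : Type*} [MeasurableSpace E₁] [MeasurableSpace E₂]
    (Ψ Φ₁ Φ₂ : E₁ × E₂ → ℝ)
    (hΨm : Measurable Ψ) (C : ℝ) (hΨb : ∀ x, |Ψ x| ≤ C)
    (hΦ₁m : Measurable Φ₁) (hΦ₂m : Measurable Φ₂)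
    (X₁ : ℝ → Ω → E₁) (X₂ : ℝ → Ω → E₂)
    (hX₁ : Measurable (fun p : ℝ × Ω => X₁ p.1 p.2))
    (hX₂ : Measurable (fun p : ℝ × Ω => X₂ p.1 p.2))
    (hindep : ∀ s t, IndepFun (X₁ s) (X₂ t) P)
    (hΦint₁ : ∀ x₂, ∀ t : ℝ, 0 ≤ t →
      (∫⁻ s in Icc (0 : ℝ) t, ∫⁻ ω, ENNReal.ofReal |Φ₁ (X₁ s ω, x₂)| ∂P) < ⊤)
    (hM₁ : ∀ x, ∀ t : ℝ, 0 ≤ t →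
      ∫ ω, (Ψ (X₁ t ω, x) - ∫ s in (0:ℝ)..t, Φ₁ (X₁ s ω, x)) ∂P = ∫ ω, Ψ (X₁ 0 ω, x) ∂P)
    (hΦint₂ : ∀ x₁, ∀ t : ℝ, 0 ≤ t →
      (∫⁻ s in Icc (0 : ℝ) t, ∫⁻ ω, ENNReal.ofReal |Φ₂ (x₁, X₂ s ω)| ∂P) < ⊤)
    (hM₂ : ∀ x, ∀ t : ℝ, 0 ≤ t →
      ∫ ω, (Ψ (x, X₂ t ω) - ∫ s in (0:ℝ)..t, Φ₂ (x, X₂ s ω)) ∂P = ∫ ω, Ψ (x, X₂ 0 ω) ∂P)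
    (hΦΦ₁ : ∀ T : ℝ, 0 ≤ T →
      (∫⁻ s in Icc (0 : ℝ) T, ∫⁻ t in Icc (0 : ℝ) T,
        ∫⁻ ω, ENNReal.ofReal |Φ₁ (X₁ s ω, X₂ t ω)| ∂P) < ⊤)
    (hΦΦ₂ : ∀ T : ℝ, 0 ≤ T →
      (∫⁻ s in Icc (0 : ℝ) T, ∫⁻ t in Icc (0 : ℝ) T,
        ∫⁻ ω, ENNReal.ofReal |Φ₂ (X₁ s ω, X₂ t ω)| ∂P) < ⊤)
    (hΦle : ∀ x₁ x₂, Φ₂ (x₁, x₂) ≤ Φ₁ (x₁, x₂)) (T : ℝ) (hT : 0 ≤ T) :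
      (∫ ω, Ψ (X₁ 0 ω, X₂ T ω) ∂P) ≤ ∫ ω, Ψ (X₁ T ω, X₂ 0 ω) ∂P := by
  have hm₁ : ∀ t, Measurable (X₁ t) := fun t => hX₁.comp measurable_prodMk_left
  have hm₂ : ∀ t, Measurable (X₂ t) := fun t => hX₂.comp measurable_prodMk_left
  have hmap : ∀ s t, P.map (fun ω => (X₁ s ω, X₂ t ω)) =
      (P.prod P).map (fun p => (X₁ s p.1, X₂ t p.2)) := by
    intro s t
    rw [(hindep s t).map_prod_eq_prod_map_map (hm₁ s).aemeasurable (hm₂ t).aemeasurable,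
      Measure.map_prod_map _ _ (hm₁ s) (hm₂ t)]
    rfl
  have hma : ∀ s t, Measurable (fun ω => (X₁ s ω, X₂ t ω)) := fun s t =>
    (hm₁ s).prodMk (hm₂ t)
  have hmb : ∀ s t, Measurable (fun p : Ω × Ω => (X₁ s p.1, X₂ t p.2)) := fun s t =>
    ((hm₁ s).comp measurable_fst).prodMk ((hm₂ t).comp measurable_snd)
  have hE : ∀ (g : E₁ × E₂ → ℝ), Measurable g → ∀ s t,
      ∫ ω, g (X₁ s ω, X₂ t ω) ∂P = ∫ p, g (X₁ s p.1, X₂ t p.2) ∂(P.prod P) := by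
    intro g hg s t
    rw [← integral_map (hma s t).aemeasurable hg.aestronglyMeasurable, hmap,
      integral_map (hmb s t).aemeasurable hg.aestronglyMeasurable]
  have hL : ∀ (g : E₁ × E₂ → ℝ≥0∞), Measurable g → ∀ s t,
      ∫⁻ ω, g (X₁ s ω, X₂ t ω) ∂P = ∫⁻ p, g (X₁ s p.1, X₂ t p.2) ∂(P.prod P) := by
    intro g hg s t
    rw [← lintegral_map hg (hma s t), hmap, lintegral_map hg (hmb s t)]
  have hE' : ∀ (g : E₁ × E₂ → ℝ), Measurable g → ∀ s t,
      ∫ ω, g (X₁ s ω, X₂ t ω) ∂P = ∫ p, g (X₁ s p.2, X₂ t p.1) ∂(P.prod P) := by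
    intro g hg s t
    rw [hE g hg, ← integral_prod_swap]; rfl
  have hL' : ∀ (g : E₁ × E₂ → ℝ≥0∞), Measurable g → ∀ s t,
      ∫⁻ ω, g (X₁ s ω, X₂ t ω) ∂P = ∫⁻ p, g (X₁ s p.2, X₂ t p.1) ∂(P.prod P) := by
    intro g hg s t
    rw [hL g hg, ← lintegral_prod_swap]; rfl
  have hmc : Measurable (fun q : (ℝ × ℝ) × Ω => (X₁ q.1.1 q.2, X₂ q.1.2 q.2)) :=
    (hX₁.comp ((measurable_fst.comp measurable_fst).prodMk measurable_snd)).prodMk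
      (hX₂.comp ((measurable_snd.comp measurable_fst).prodMk measurable_snd))
  have hS₁ := fun t => aux_side P P Ψ Φ₁ hΨm C hΨb hΦ₁m X₁ hX₁ hΦint₁ hM₁ (X₂ t) (hm₂ t)
  have hS₂ := fun s => aux_side P P (fun q : E₂ × E₁ => Ψ (q.2, q.1)) (fun q => Φ₂ (q.2, q.1))
    (hΨm.comp measurable_swap) C (fun q => hΨb _) (hΦ₂m.comp measurable_swap)
    X₂ hX₂ hΦint₂ hM₂ (X₁ s) (hm₁ s)
  have hab : ∀ Φ : E₁ × E₂ → ℝ, Measurable Φ → Measurable (fun x => ENNReal.ofReal |Φ x|) :=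
    fun Φ h => by fun_prop
  have hlm : ∀ Φ : E₁ × E₂ → ℝ, Measurable Φ →
      Measurable (fun q : ℝ × ℝ => ∫⁻ ω, ENNReal.ofReal |Φ (X₁ q.1 ω, X₂ q.2 ω)| ∂P) :=
    fun Φ h => ((hab Φ h).comp hmc).lintegral_prod_right'
  have hI : ∀ Φ : E₁ × E₂ → ℝ, Measurable Φ → (∀ T : ℝ, 0 ≤ T →
      (∫⁻ s in Icc (0 : ℝ) T, ∫⁻ t in Icc (0 : ℝ) T,
        ∫⁻ ω, ENNReal.ofReal |Φ (X₁ s ω, X₂ t ω)| ∂P) < ⊤) → ∀ T : ℝ, 0 ≤ T →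
      Integrable (fun q : (ℝ × ℝ) × Ω => Φ (X₁ q.1.1 q.2, X₂ q.1.2 q.2))
        ((volume.restrict (Icc (0:ℝ) T ×ˢ Icc (0:ℝ) T)).prod P) := by
    intro Φ hΦ hfin T hT
    refine aux_int _ _ _ (hΦ.comp hmc) ?_
    rw [Measure.volume_eq_prod, ← Measure.prod_restrict, lintegral_prod _ (hlm Φ hΦ).aemeasurable]
    exact hfin T hT
  refine aux_core (fun s t => ∫ ω, Ψ (X₁ s ω, X₂ t ω) ∂P)
    (fun s t => ∫ ω, Φ₁ (X₁ s ω, X₂ t ω) ∂P) (fun s t => ∫ ω, Φ₂ (X₁ s ω, X₂ t ω) ∂P)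
    ?_ C ?_ ?_ ?_ ?_ ?_ ?_ ?_ ?_ T hT
  · exact ((hΨm.comp hmc).stronglyMeasurable.integral_prod_right').measurable
  · intro s t
    have := norm_integral_le_of_norm_le_const (μ := P) (f := fun ω => Ψ (X₁ s ω, X₂ t ω)) (C := C)
        (Eventually.of_forall fun ω => hΨb _)
    simpa using this
  · intro T hT
    simp_rw [hE Ψ hΨm]
    exact (hS₁ 0).1 T hT
  · intro T hT
    simp_rw [hE' Ψ hΨm]
    exact (hS₂ 0).1 T hT
  · intro T hT
    exact (hI Φ₁ hΦ₁m hΦΦ₁ T hT).integral_prod_left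
  · intro T hT
    exact (hI Φ₂ hΦ₂m hΦΦ₂ T hT).integral_prod_left
  · intro T hT
    have h1 := hΦΦ₁ T hT
    rw [lintegral_lintegral_swap (hlm Φ₁ hΦ₁m).aemeasurable] at h1
    have h2 := ae_lt_top (hlm Φ₁ hΦ₁m).lintegral_prod_left' h1.ne
    rw [ae_restrict_iff' measurableSet_Icc] at h2
    filter_upwards [h2] with t ht htm
    simp_rw [hE Ψ hΨm, hE Φ₁ hΦ₁m]
    refine (hS₁ t).2 T ?_
    have h3 := ht htm
    simp_rw [hL _ (hab _ hΦ₁m)] at h3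
    exact h3
  · intro T hT
    have h2 := ae_lt_top (hlm Φ₂ hΦ₂m).lintegral_prod_right' (hΦΦ₂ T hT).ne
    rw [ae_restrict_iff' measurableSet_Icc] at h2
    filter_upwards [h2] with t ht htm
    simp_rw [hE' Ψ hΨm, hE' Φ₂ hΦ₂m]
    refine (hS₂ t).2 T ?_
    have h3 := ht htm
    simp_rw [hL' _ (hab _ hΦ₂m)] at h3
    exact h3
  · intro T hT
    filter_upwards [(hI Φ₁ hΦ₁m hΦΦ₁ T hT).prod_right_ae, (hI Φ₂ hΦ₂m hΦΦ₂ T hT).prod_right_ae]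
      with p h1 h2
    exact integral_mono h2 h1 fun ω => hΦle _ _

lemma aux_mart {Ω : Type*} [MeasurableSpace Ω] (P : Measure Ω) [IsProbabilityMeasure P]
    {F : Type*} [TopologicalSpace F] [TopologicalSpace.MetrizableSpace F]
    [MeasurableSpace F] [BorelSpace F] (X : ℝ → Ω → F) (hsm : ∀ t, StronglyMeasurable (X t))
    (ψ φ : F → ℝ) (h : Martingale
      (fun (t : ℝ≥0) ω => ψ (X t ω) - ∫ s in (0 : ℝ)..(t : ℝ), φ (X s ω))
      (Filtration.natural (fun (t : ℝ≥0) => X t) (fun t => hsm t)) P) (t : ℝ) (ht : 0 ≤ t) :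
    ∫ ω, (ψ (X (max t 0) ω) - ∫ s in (0 : ℝ)..t, φ (X (max s 0) ω)) ∂P =
        ∫ ω, ψ (X (max 0 0) ω) ∂P := by
  have h0 : (0 : ℝ≥0) ≤ ⟨t, ht⟩ := ht
  have h1 := h.setIntegral_eq h0 MeasurableSet.univ
  simp only [Measure.restrict_univ, NNReal.coe_zero, intervalIntegral.integral_same,
    sub_zero] at h1
  rw [max_self, h1, max_eq_left ht]
  refine integral_congr_ae (Eventually.of_forall fun ω => ?_)
  change _ - _ = ψ (X t ω) - ∫ s in (0 : ℝ)..t, φ (X s ω)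
  congr 1
  refine intervalIntegral.integral_congr fun s hs => ?_
  rw [uIcc_of_le ht] at hs
  simp only [max_eq_left hs.1]

lemma aux_rc {F : Type*} [TopologicalSpace F] (x : ℝ → F)
    (h : ∀ t : ℝ, 0 ≤ t → ContinuousWithinAt x (Ici t) t) (t : ℝ) :
    ContinuousWithinAt (fun s => x (max s 0)) (Ici t) t := by
  have h1 : ContinuousWithinAt (fun s : ℝ => max s 0) (Ici t) t :=
    (continuous_id.max continuous_const).continuousWithinAt
  have h2 : MapsTo (fun s : ℝ => max s 0) (Ici t) (Ici (max t 0)) :=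
    fun s hs => max_le_max (mem_Ici.1 hs) le_rfl
  exact ContinuousWithinAt.comp (f := fun s : ℝ => max s 0) (g := x) (x := t)
    (h (max t 0) (le_max_right _ _)) h1 h2

/-- **Duality with error term** (Athreya–Swart, correction to "Branching-coalescing
particle systems", Corollary: everywhere inequality). -/
theorem everywhere_inequality_ge
    {Ω : Type*} [MeasurableSpace Ω] (P : Measure Ω) [IsProbabilityMeasure P]
    {E₁ E₂ : Type*}
    [TopologicalSpace E₁] [TopologicalSpace.MetrizableSpace E₁]
    [MeasurableSpace E₁] [BorelSpace E₁]
    [TopologicalSpace E₂] [TopologicalSpace.MetrizableSpace E₂]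
    [MeasurableSpace E₂] [BorelSpace E₂]
    (Ψ Φ₁ Φ₂ : E₁ × E₂ → ℝ)
    (hΨm : Measurable Ψ) (C : ℝ) (hΨb : ∀ x, |Ψ x| ≤ C)
    (hΦ₁m : Measurable Φ₁) (hΦ₂m : Measurable Φ₂)
    (X₁ : ℝ → Ω → E₁) (X₂ : ℝ → Ω → E₂)
    (hX₁sm : ∀ t, StronglyMeasurable (X₁ t))
    (hX₂sm : ∀ t, StronglyMeasurable (X₂ t))
    -- càdlàg sample paths on [0,∞)
    (hX₁rc : ∀ ω, ∀ t : ℝ, 0 ≤ t → ContinuousWithinAt (fun s => X₁ s ω) (Ici t) t)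
    (hX₁ll : ∀ ω, ∀ t : ℝ, 0 < t →
      ∃ l, Tendsto (fun s => X₁ s ω) (nhdsWithin t (Iio t)) (nhds l))
    (hX₂rc : ∀ ω, ∀ t : ℝ, 0 ≤ t → ContinuousWithinAt (fun s => X₂ s ω) (Ici t) t)
    (hX₂ll : ∀ ω, ∀ t : ℝ, 0 < t →
      ∃ l, Tendsto (fun s => X₂ s ω) (nhdsWithin t (Iio t)) (nhds l))
    -- X¹ and X² are independent
    (hindep : IndepFun (fun ω t => X₁ t ω) (fun ω t => X₂ t ω) P)
    -- martingale problem for X¹ (with integrability), for every x₂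
    (hΨint₁ : ∀ x₂, ∀ t : ℝ, 0 ≤ t → Integrable (fun ω => Ψ (X₁ t ω, x₂)) P)
    (hΦint₁ : ∀ x₂, ∀ t : ℝ, 0 ≤ t →
      (∫⁻ s in Icc (0 : ℝ) t, ∫⁻ ω, ENNReal.ofReal |Φ₁ (X₁ s ω, x₂)| ∂P) < ⊤)
    (hmart₁ : ∀ x₂, Martingale
      (fun (t : ℝ≥0) ω => Ψ (X₁ t ω, x₂) - ∫ s in (0 : ℝ)..(t : ℝ), Φ₁ (X₁ s ω, x₂))
      (Filtration.natural (fun (t : ℝ≥0) => X₁ t) (fun t => hX₁sm t)) P)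
    -- martingale problem for X² (with integrability), for every x₁
    (hΨint₂ : ∀ x₁, ∀ t : ℝ, 0 ≤ t → Integrable (fun ω => Ψ (x₁, X₂ t ω)) P)
    (hΦint₂ : ∀ x₁, ∀ t : ℝ, 0 ≤ t →
      (∫⁻ s in Icc (0 : ℝ) t, ∫⁻ ω, ENNReal.ofReal |Φ₂ (x₁, X₂ s ω)| ∂P) < ⊤)
    (hmart₂ : ∀ x₁, Martingale
      (fun (t : ℝ≥0) ω => Ψ (x₁, X₂ t ω) - ∫ s in (0 : ℝ)..(t : ℝ), Φ₂ (x₁, X₂ s ω))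
      (Filtration.natural (fun (t : ℝ≥0) => X₂ t) (fun t => hX₂sm t)) P)
    -- double integrability assumption (1.7)
    (hΦΦ₁ : ∀ T : ℝ, 0 ≤ T →
      (∫⁻ s in Icc (0 : ℝ) T, ∫⁻ t in Icc (0 : ℝ) T,
        ∫⁻ ω, ENNReal.ofReal |Φ₁ (X₁ s ω, X₂ t ω)| ∂P) < ⊤)
    (hΦΦ₂ : ∀ T : ℝ, 0 ≤ T →
      (∫⁻ s in Icc (0 : ℝ) T, ∫⁻ t in Icc (0 : ℝ) T,
        ∫⁻ ω, ENNReal.ofReal |Φ₂ (X₁ s ω, X₂ t ω)| ∂P) < ⊤)     (hΦle : ∀ x₁ x₂, Φ₂ (x₁, x₂) ≤ Φ₁ (x₁, x₂)) :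
    ∀ T : ℝ, 0 ≤ T →
      (∫ ω, Ψ (X₁ 0 ω, X₂ T ω) ∂P) ≤ ∫ ω, Ψ (X₁ T ω, X₂ 0 ω) ∂P := by
  intro T hT
  have := aux_main P Ψ Φ₁ Φ₂ hΨm C hΨb hΦ₁m hΦ₂m (fun s => X₁ (max s 0)) (fun s => X₂ (max s 0))
    (aux_joint _ (fun t => (hX₁sm _).measurable) (fun ω => aux_rc _ (hX₁rc ω)))
    (aux_joint _ (fun t => (hX₂sm _).measurable) (fun ω => aux_rc _ (hX₂rc ω)))
    (fun s t => hindep.comp (measurable_pi_apply (max s 0)) (measurable_pi_apply (max t 0)))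
    ?_ (fun x => aux_mart P X₁ hX₁sm (fun y => Ψ (y, x)) (fun y => Φ₁ (y, x)) (hmart₁ x))
    ?_ (fun x => aux_mart P X₂ hX₂sm (fun y => Ψ (x, y)) (fun y => Φ₂ (x, y)) (hmart₂ x))
    ?_ ?_ hΦle T hT
  · simpa only [max_self, max_eq_left hT] using this
  · intro x t ht
    refine lt_of_eq_of_lt (setLIntegral_congr_fun measurableSet_Icc fun s hs => ?_) (hΦint₁ x t ht)
    simp only [max_eq_left hs.1]
  · intro x t ht
    refine lt_of_eq_of_lt (setLIntegral_congr_fun measurableSet_Icc fun s hs => ?_) (hΦint₂ x t ht)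
    simp only [max_eq_left hs.1]
  · intro T hT
    refine lt_of_eq_of_lt (setLIntegral_congr_fun measurableSet_Icc fun s hs => ?_) (hΦΦ₁ T hT)
    refine setLIntegral_congr_fun measurableSet_Icc fun t ht => ?_
    simp only [max_eq_left hs.1, max_eq_left ht.1]
  · intro T hT
    refine lt_of_eq_of_lt (setLIntegral_congr_fun measurableSet_Icc fun s hs => ?_) (hΦΦ₂ T hT)
    refine setLIntegral_congr_fun measurableSet_Icc fun t ht => ?_
    simp only [max_eq_left hs.1, max_eq_left ht.1]
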